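/- Let μ > −1/2, 1/2 < ν < μ+1 and 0 < β < 1. Then for all x > 0, ∫_0^x e^{−βu} u^ν t̃_{μ,ν}(u) du > (1/(1−β)) · ( (1 − 2ν(μ+ν+(5+√17)/2)/((2ν−1)(1−β)x)) · e^{−βx} x^ν t̃_{μ,ν}(x) − B_{μ,ν,β}(x) ). -/

import Mathlib

/-!
Write `a = μ + ν + 1`, `a' = μ - ν + 1`, and factor the Lommel function as
`t̃_{μ,ν}(x) = x ^ (μ + 1) * g x`, where `g` is an even entire function; similarly
`t̃_{μ-1,ν-1}(x) = x ^ μ * h x`. The contiguous relations of the Lommel functions then become a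
first-order system, regular at the origin (`lommel_system`),
`x g' = h - a g` and `x h' = -a' h + a A + x² g`,
with `A = 1 / (2 ^ μ Γ((μ-ν+1)/2) Γ((μ+ν+3)/2)) > 0`.

Three inequalities follow from this system. In each case a function that vanishes at `0` is shown
to have a positive derivative on `(0, ∞)` (`pos_of_hasDerivAt_pos`):

* `lower_ratio`: `(x + s) g < h` if `0 < s ≤ ν - 1/2`, that is
  `x (t̃_{μ-1,ν-1} - t̃_{μ,ν}) > s t̃_{μ,ν}`, by the integrating factor `e^x x^(s+a')`;
* `upper_diff`: `h - 2νg - A < x g`, that is `t̃_{μ+1,ν+1} < t̃_{μ,ν}`, by the integrating factor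
  `e^x x^a`;
* `integral_lower`: with `I = ∫₀ˣ e^{-βu} u^ν t̃_{μ,ν}(u) du`,
  `(1-β) I > e^{-βx} x^a g - (2ν / (s(1-β))) (e^{-βx} - e^{-x}) x^(a-1) g - A ∫₀ˣ e^{-βu} u^(a-1) du`.
  The `s`-term dominates `2ν ∫₀ˣ e^{-βu} u^(ν-1) t̃_{μ,ν}(u) du`, which is what remains after an
  integration by parts.

The theorem is the case `s = (2ν - 1) / (μ + ν + (5 + √17)/2)` of the last bound, after discarding
the term with `e^{-x}`: this `s` is at most both `1` and `ν - 1/2`, and the last integral is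
`Bconst` up to the factor `A` (`Bconst_eq`).
-/

open Real MeasureTheory

/-- Normalised modified Lommel function of the first kind. -/
noncomputable def lommel (μ ν x : ℝ) : ℝ :=
  ∑' k : ℕ, (x / 2) ^ (μ + 2 * (k : ℝ) + 1) /
    (Real.Gamma ((k : ℝ) + (μ - ν + 3) / 2) * Real.Gamma ((k : ℝ) + (μ + ν + 3) / 2))

/-- Lower incomplete gamma function. -/
noncomputable def lowerGamma (a x : ℝ) : ℝ :=
  ∫ u in (0:ℝ)..x, Real.exp (-u) * u ^ (a - 1)

noncomputable def Bconst (μ ν β x : ℝ) : ℝ :=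
  β ^ (-μ - ν - 1) * lowerGamma (μ + ν + 1) (β * x) /
    (2 ^ μ * Real.Gamma ((μ - ν + 1) / 2) * Real.Gamma ((μ + ν + 3) / 2))

/-! ### Even power series with coefficients `O(1/k!)` -/

/-- The even power series `∑ c k * x ^ (2 k)`, written in powers of `x ^ 2`. -/
noncomputable def evenSeries (c : ℕ → ℝ) (x : ℝ) : ℝ := ∑' k : ℕ, c k * (x ^ 2) ^ k

lemma summable_of_factorial_bound {c : ℕ → ℝ} {C : ℝ}
    (hc : ∀ k, |c k| ≤ C / k.factorial) (z : ℝ) :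
    Summable fun k => c k * z ^ k := by
  refine Summable.of_norm_bounded ((Real.summable_pow_div_factorial |z|).mul_left C) fun k => ?_
  rw [Real.norm_eq_abs, abs_mul, abs_pow]
  calc |c k| * |z| ^ k ≤ C / k.factorial * |z| ^ k := by gcongr; exact hc k
    _ = C * (|z| ^ k / k.factorial) := by ring

/-- The bound `O(1/k!)` passes to the coefficients of the differentiated series. -/
lemma factorial_bound_shift {c : ℕ → ℝ} {C : ℝ} (hc : ∀ k, |c k| ≤ C / k.factorial) (k : ℕ) :
    |((k : ℝ) + 1) * c (k + 1)| ≤ C / k.factorial := by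
  have h := hc (k + 1)
  have hk : (0 : ℝ) < (k : ℝ) + 1 := by positivity
  rw [abs_mul, abs_of_pos hk]
  calc ((k : ℝ) + 1) * |c (k + 1)| ≤ ((k : ℝ) + 1) * (C / (k + 1).factorial) := by gcongr
    _ = C / k.factorial := by
      rw [Nat.factorial_succ]; push_cast; field_simp

lemma hasDerivAt_tsum_pow {c : ℕ → ℝ} {C : ℝ} (hc : ∀ k, |c k| ≤ C / k.factorial) (z : ℝ) :
    HasDerivAt (fun z => ∑' k : ℕ, c k * z ^ k)
      (∑' k : ℕ, (((k : ℝ) + 1) * c (k + 1)) * z ^ k) z := by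
  set R := |z| + 1
  have hR : 0 ≤ R := by positivity
  have hu : Summable fun k : ℕ => |c k| * (k * R ^ (k - 1)) := by
    rw [← summable_nat_add_iff 1]
    refine (summable_of_factorial_bound (factorial_bound_shift hc) R).abs.congr fun k => ?_
    have hk : (0 : ℝ) < (k : ℝ) + 1 := by positivity
    rw [abs_mul, abs_mul, abs_of_pos hk, abs_pow, abs_of_nonneg hR]
    push_cast
    ring
  have key := hasDerivAt_tsum_of_isPreconnected (t := Metric.ball (0 : ℝ) R) (y₀ := 0) (y := z)
    (g := fun k z => c k * z ^ k) (g' := fun k z => c k * (k * z ^ (k - 1))) hu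
    Metric.isOpen_ball (convex_ball _ _).isPreconnected
    (fun k y _ => (hasDerivAt_pow k y).const_mul (c k))
    (fun k y hy => by
      rw [Real.norm_eq_abs, abs_mul, abs_mul, abs_pow, Nat.abs_cast]
      have : |y| ≤ R := by simpa using (Metric.mem_ball.1 hy).le
      gcongr)
    (Metric.mem_ball_self (by positivity)) (summable_of_factorial_bound hc 0)
    (by simp [R])
  have hs : Summable fun k : ℕ => c k * (k * z ^ (k - 1)) := by
    refine Summable.of_norm_bounded hu fun k => ?_
    rw [Real.norm_eq_abs, abs_mul, abs_mul, abs_pow, Nat.abs_cast]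
    have : |z| ≤ R := by simp [R]
    gcongr
  have he : ∑' k : ℕ, c k * (k * z ^ (k - 1)) =
      ∑' k : ℕ, (((k : ℝ) + 1) * c (k + 1)) * z ^ k := by
    rw [hs.tsum_eq_zero_add]
    simp only [Nat.cast_zero, zero_mul, mul_zero, zero_add, Nat.add_sub_cancel]
    refine tsum_congr fun k => ?_
    push_cast
    ring
  rwa [he] at key

/-- The Euler operator `x d/dx` multiplies the `k`-th coefficient of an even series by `2 k`. The
derivative is left implicit, since only its product with `x` is needed. -/
lemma evenSeries_euler {c : ℕ → ℝ} {C : ℝ} (hc : ∀ k, |c k| ≤ C / k.factorial) (x : ℝ) :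
    ∃ d, HasDerivAt (evenSeries c) d x ∧ x * d = evenSeries (fun k => 2 * k * c k) x := by
  have hd : HasDerivAt (evenSeries c)
      ((∑' k : ℕ, (((k : ℝ) + 1) * c (k + 1)) * (x ^ 2) ^ k) * ((2 : ℕ) * x ^ (2 - 1))) x := by
    have h1 := hasDerivAt_tsum_pow hc (x ^ 2)
    exact HasDerivAt.comp (h := fun x : ℝ => x ^ 2) x h1 (hasDerivAt_pow 2 x)
  refine ⟨_, hd, ?_⟩
  have hs : Summable fun k : ℕ => (2 * k * c k) * (x ^ 2) ^ k := by
    rw [← summable_nat_add_iff 1]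
    refine ((summable_of_factorial_bound (factorial_bound_shift hc) (x ^ 2)).mul_left
      (2 * x ^ 2)).congr fun k => ?_
    push_cast
    ring
  rw [evenSeries, hs.tsum_eq_zero_add]
  simp only [Nat.cast_zero, zero_mul, mul_zero, zero_add]
  rw [← tsum_mul_right, ← tsum_mul_left]
  refine tsum_congr fun k => ?_
  push_cast
  ring

/-! ### The first-order system satisfied by the Lommel function -/

/-- The coefficient of `x ^ (μ + 2 k + 1)` in `lommel μ ν x`. -/
noncomputable def lommelCoeff (μ ν : ℝ) (k : ℕ) : ℝ :=
  (1 / 2 : ℝ) ^ (μ + 2 * (k : ℝ) + 1) /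
    (Real.Gamma ((k : ℝ) + (μ - ν + 3) / 2) * Real.Gamma ((k : ℝ) + (μ + ν + 3) / 2))

section coeff

variable {μ ν : ℝ}

lemma lommelCoeff_pos (ha : 0 < μ + ν + 1) (ha' : 0 < μ - ν + 1) (k : ℕ) :
    0 < lommelCoeff μ ν k := by
  have hk : (0 : ℝ) ≤ k := k.cast_nonneg
  have h1 := Real.Gamma_pos_of_pos (s := (k : ℝ) + (μ - ν + 3) / 2) (by linarith)
  have h2 := Real.Gamma_pos_of_pos (s := (k : ℝ) + (μ + ν + 3) / 2) (by linarith)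
  unfold lommelCoeff
  positivity

lemma lommelCoeff_succ (ha : 0 < μ + ν + 1) (ha' : 0 < μ - ν + 1) (k : ℕ) :
    (2 * ((k : ℝ) + 1) + (μ - ν + 1)) * ((2 * ((k : ℝ) + 1) + (μ + ν + 1)) *
      lommelCoeff μ ν (k + 1)) = lommelCoeff μ ν k := by
  have hk : (0 : ℝ) ≤ k := k.cast_nonneg
  have h1 := Real.Gamma_pos_of_pos (s := (k : ℝ) + (μ - ν + 3) / 2) (by linarith)
  have h2 := Real.Gamma_pos_of_pos (s := (k : ℝ) + (μ + ν + 3) / 2) (by linarith)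
  have e1 := Real.Gamma_add_one (s := (k : ℝ) + (μ - ν + 3) / 2) (by linarith)
  have e2 := Real.Gamma_add_one (s := (k : ℝ) + (μ + ν + 3) / 2) (by linarith)
  have e3 : (1 / 2 : ℝ) ^ (μ + 2 * ((k : ℝ) + 1) + 1) = (1 / 2) ^ (μ + 2 * (k : ℝ) + 1) / 4 := by
    rw [show μ + 2 * ((k : ℝ) + 1) + 1 = (μ + 2 * (k : ℝ) + 1) + (2 : ℕ) by push_cast; ring,
      Real.rpow_add_natCast (by norm_num)]
    ring
  have p1 : (k : ℝ) + (μ - ν + 3) / 2 ≠ 0 := by linarith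
  have p2 : (k : ℝ) + (μ + ν + 3) / 2 ≠ 0 := by linarith
  unfold lommelCoeff
  push_cast
  rw [e3, show (k : ℝ) + 1 + (μ - ν + 3) / 2 = (k : ℝ) + (μ - ν + 3) / 2 + 1 by ring,
    show (k : ℝ) + 1 + (μ + ν + 3) / 2 = (k : ℝ) + (μ + ν + 3) / 2 + 1 by ring, e1, e2,
    show 2 * ((k : ℝ) + 1) + (μ - ν + 1) = 2 * ((k : ℝ) + (μ - ν + 3) / 2) by ring,
    show 2 * ((k : ℝ) + 1) + (μ + ν + 1) = 2 * ((k : ℝ) + (μ + ν + 3) / 2) by ring]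
  generalize (k : ℝ) + (μ - ν + 3) / 2 = p at *
  generalize (k : ℝ) + (μ + ν + 3) / 2 = q at *
  field_simp
  norm_num

lemma lommelCoeff_bound (ha : 0 < μ + ν + 1) (ha' : 0 < μ - ν + 1) (k : ℕ) :
    |lommelCoeff μ ν k| ≤ lommelCoeff μ ν 0 / k.factorial := by
  rw [abs_of_pos (lommelCoeff_pos ha ha' k)]
  induction k with
  | zero => simp
  | succ k ih =>
    have hk : (0 : ℝ) ≤ k := k.cast_nonneg
    have hp := lommelCoeff_pos ha ha' (k + 1)
    have hs := lommelCoeff_succ ha ha' k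
    have hF : (0 : ℝ) < k.factorial := by positivity
    rw [le_div_iff₀ hF] at ih
    rw [Nat.factorial_succ, le_div_iff₀ (by positivity)]
    push_cast
    have h1 : ((k : ℝ) + 1) * lommelCoeff μ ν (k + 1) ≤ lommelCoeff μ ν k := by
      rw [← hs, ← mul_assoc]
      gcongr
      nlinarith
    nlinarith

/-- The bound `O(1/k!)` for the coefficients of `t̃_{μ-1,ν-1}`. -/
lemma lommelCoeff_mul_bound (ha : 0 < μ + ν + 1) (ha' : 0 < μ - ν + 1) (k : ℕ) :
    |(2 * (k : ℝ) + (μ + ν + 1)) * lommelCoeff μ ν k| ≤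
      (1 + (μ + ν + 1)) * lommelCoeff μ ν 0 / k.factorial := by
  have h0 := lommelCoeff_pos ha ha' 0
  rcases k with _ | k
  · rw [abs_of_nonneg (by positivity)]
    simp
    nlinarith
  · have hk : (0 : ℝ) ≤ k := k.cast_nonneg
    have hs := lommelCoeff_succ ha ha' k
    have hp := lommelCoeff_pos ha ha' (k + 1)
    have hb := lommelCoeff_bound ha ha' k
    rw [abs_of_pos (lommelCoeff_pos ha ha' k)] at hb
    have hF : (0 : ℝ) < k.factorial := by positivity
    rw [le_div_iff₀ hF] at hb
    rw [abs_of_nonneg (by positivity), Nat.factorial_succ, le_div_iff₀ (by positivity)]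
    push_cast
    set B := (2 * ((k : ℝ) + 1) + (μ + ν + 1)) * lommelCoeff μ ν (k + 1) with hB
    have hB0 : 0 < B := by positivity
    have h1 : ((k : ℝ) + 1) * B ≤ lommelCoeff μ ν k := by
      nlinarith [mul_nonneg hk hB0.le, mul_pos ha' hB0]
    nlinarith

/-- The inhomogeneity of the contiguous relations, through `Γ(z + 1) = z Γ(z)`. -/
lemma lommelCoeff_zero (ha' : 0 < μ - ν + 1) :
    (μ - ν + 1) * lommelCoeff μ ν 0 =
      1 / (2 ^ μ * Real.Gamma ((μ - ν + 1) / 2) * Real.Gamma ((μ + ν + 3) / 2)) := by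
  have e1 := Real.Gamma_add_one (s := (μ - ν + 1) / 2) (by linarith)
  unfold lommelCoeff
  simp only [Nat.cast_zero, zero_add, mul_zero, add_zero]
  rw [show (μ - ν + 3) / 2 = (μ - ν + 1) / 2 + 1 by ring, e1, one_div, Real.inv_rpow (by norm_num),
    Real.rpow_add_one (by norm_num)]
  field_simp

lemma lommel_eq {x : ℝ} (hx : 0 < x) :
    lommel μ ν x = x ^ (μ + 1) * evenSeries (lommelCoeff μ ν) x := by
  unfold lommel evenSeries lommelCoeff
  rw [← tsum_mul_left]
  refine tsum_congr fun k => ?_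
  rw [show x / 2 = x * (1 / 2) by ring, Real.mul_rpow hx.le (by norm_num),
    show μ + 2 * (k : ℝ) + 1 = (μ + 1) + (2 * k : ℕ) by push_cast; ring,
    Real.rpow_add_natCast hx.ne', pow_mul]
  ring

/-- Here `x ^ (μ + 1) * g x` is `t̃_{μ,ν}(x)` and `x ^ μ * h x` is `t̃_{μ-1,ν-1}(x)`; the two
differential equations are the contiguous relations. -/
lemma lommel_system (ha : 0 < μ + ν + 1) (ha' : 0 < μ - ν + 1) :
    ∃ g h g' h' : ℝ → ℝ, ∃ A : ℝ,
      A = 1 / (2 ^ μ * Real.Gamma ((μ - ν + 1) / 2) * Real.Gamma ((μ + ν + 3) / 2)) ∧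
      (∀ x, 0 < x → lommel μ ν x = x ^ (μ + 1) * g x) ∧ 0 < A ∧
      (∀ x, 0 < g x) ∧ (∀ x, HasDerivAt g (g' x) x) ∧ (∀ x, HasDerivAt h (h' x) x) ∧
      (∀ x, x * g' x = h x - (μ + ν + 1) * g x) ∧
      (∀ x, x * h' x = -(μ - ν + 1) * h x + (μ + ν + 1) * A + x ^ 2 * g x) := by
  have hc := lommelCoeff_bound ha ha'
  have hb := lommelCoeff_mul_bound ha ha'
  choose g' hg' hg'e using fun x => evenSeries_euler hc x
  choose h' hh' hh'e using fun x => evenSeries_euler hb x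
  refine ⟨evenSeries (lommelCoeff μ ν),
    evenSeries (fun k : ℕ => (2 * (k : ℝ) + (μ + ν + 1)) * lommelCoeff μ ν k), g', h',
    (μ - ν + 1) * lommelCoeff μ ν 0, lommelCoeff_zero ha', fun x hx => lommel_eq hx,
    mul_pos ha' (lommelCoeff_pos ha ha' 0), fun x => ?_, hg', hh', fun x => ?_, fun x => ?_⟩
  · refine (summable_of_factorial_bound hc (x ^ 2)).tsum_pos (fun k => ?_) 0 ?_
    · have := lommelCoeff_pos ha ha' k
      positivity
    · simpa using lommelCoeff_pos ha ha' 0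
  · rw [hg'e]
    unfold evenSeries
    rw [← tsum_mul_left, ← (summable_of_factorial_bound hb (x ^ 2)).tsum_sub
      ((summable_of_factorial_bound hc (x ^ 2)).mul_left _)]
    refine tsum_congr fun k => ?_
    ring
  · have sc := summable_of_factorial_bound hc (x ^ 2)
    have sb := summable_of_factorial_bound hb (x ^ 2)
    -- The recurrence for the coefficients turns the tail of the series of `x h' + a' h` into `x² g`.
    have e : ∀ k : ℕ, 2 * ((k + 1 : ℕ) : ℝ) * ((2 * ((k + 1 : ℕ) : ℝ) + (μ + ν + 1)) *
        lommelCoeff μ ν (k + 1)) * (x ^ 2) ^ (k + 1) =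
        x ^ 2 * (lommelCoeff μ ν k * (x ^ 2) ^ k) - (μ - ν + 1) *
        ((2 * ((k + 1 : ℕ) : ℝ) + (μ + ν + 1)) * lommelCoeff μ ν (k + 1) * (x ^ 2) ^ (k + 1)) := by
      intro k
      rw [← lommelCoeff_succ ha ha' k]
      push_cast
      ring
    have sb1 := (summable_nat_add_iff 1).2 sb
    have s1 := (sc.mul_left (x ^ 2)).sub (sb1.mul_left (μ - ν + 1))
    have s2 : Summable fun k : ℕ => 2 * (k : ℝ) * ((2 * (k : ℝ) + (μ + ν + 1)) *
        lommelCoeff μ ν k) * (x ^ 2) ^ k :=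
      (summable_nat_add_iff 1).1 (s1.congr fun k => (e k).symm)
    rw [hh'e]
    unfold evenSeries
    rw [s2.tsum_eq_zero_add, sb.tsum_eq_zero_add, tsum_congr e,
      (sc.mul_left (x ^ 2)).tsum_sub (sb1.mul_left (μ - ν + 1)), tsum_mul_left, tsum_mul_left]
    simp only [Nat.cast_zero, pow_zero]
    ring

end coeff

/-! ### Inequalities deduced from the system -/

section system

lemma pos_of_hasDerivAt_pos {f : ℝ → ℝ} (hf : ContinuousOn f (Set.Ici 0)) (h0 : f 0 = 0)
    (hd : ∀ x, 0 < x → ∃ d, HasDerivAt f d x ∧ 0 < d) {x : ℝ} (hx : 0 < x) : 0 < f x := by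
  have hm : StrictMonoOn f (Set.Ici 0) := by
    refine strictMonoOn_of_deriv_pos (convex_Ici 0) hf fun y hy => ?_
    rw [interior_Ici] at hy
    obtain ⟨d, h1, h2⟩ := hd y hy
    rwa [h1.deriv]
  simpa [h0] using hm (Set.mem_Ici.2 le_rfl) (Set.mem_Ici.2 hx.le) hx

lemma mul_rpow_sub_one {x : ℝ} (hx : 0 < x) (p : ℝ) : x * x ^ (p - 1) = x ^ p := by
  rw [Real.rpow_sub_one hx.ne']
  field_simp

variable {μ ν A : ℝ} {g h g' h' : ℝ → ℝ}

/-- Equivalently, `x (t̃_{μ-1,ν-1} - t̃_{μ,ν}) > s t̃_{μ,ν}`, so that `e^{-x} x^(ν-s) t̃_{μ,ν}(x)` is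
increasing. -/
lemma lower_ratio (hν2 : ν < μ + 1) {s : ℝ} (hs0 : 0 < s)
    (hs : s ≤ (2 * ν - 1) / 2) (hA : 0 < A) (hg0 : ∀ x, 0 < g x)
    (hg : ∀ x, HasDerivAt g (g' x) x) (hh : ∀ x, HasDerivAt h (h' x) x)
    (hge : ∀ x, x * g' x = h x - (μ + ν + 1) * g x)
    (hhe : ∀ x, x * h' x = -(μ - ν + 1) * h x + (μ + ν + 1) * A + x ^ 2 * g x)
    {x : ℝ} (hx : 0 < x) : (x + s) * g x < h x := by
  set p := s + (μ - ν + 1) with hp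
  have hp0 : 0 < p := by linarith
  have hgc : Continuous g := continuous_iff_continuousAt.2 fun x => (hg x).continuousAt
  have hhc : Continuous h := continuous_iff_continuousAt.2 fun x => (hh x).continuousAt
  have hpc : Continuous fun x : ℝ => x ^ p := Real.continuous_rpow_const hp0.le
  have key : 0 < Real.exp x * x ^ p * (h x - (x + s) * g x) := by
    refine pos_of_hasDerivAt_pos (f := fun x => Real.exp x * x ^ p * (h x - (x + s) * g x))
      (by fun_prop) (by simp [Real.zero_rpow hp0.ne']) (fun x hx => ?_) hx
    have hd := ((Real.hasDerivAt_exp x).mul (Real.hasDerivAt_rpow_const (p := p) (Or.inl hx.ne'))).mul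
      ((hh x).sub (((hasDerivAt_id x).add_const s).mul (hg x)))
    refine ⟨_, hd, ?_⟩
    refine pos_of_mul_pos_right (a := x) ?_ hx.le
    have hW : 0 < Real.exp x * x ^ p *
        (g x * ((2 * ν - 1 - 2 * s) * x + s * (2 * ν - s)) + (μ + ν + 1) * A) := by
      have h1 : 0 ≤ 2 * ν - 1 - 2 * s := by linarith
      have h2 : 0 < 2 * ν - s := by linarith
      have h3 : 0 < μ + ν + 1 := by linarith
      have := hg0 x
      positivity
    refine hW.trans_eq (Eq.symm ?_)
    simp only [Pi.mul_apply, Pi.sub_apply, id]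
    -- Both sides are brought to the common factor `x ^ p`; the system replaces `x g'` and `x h'`.
    linear_combination Real.exp x * p * (h x - (x + s) * g x) * mul_rpow_sub_one hx p +
      Real.exp x * x ^ p * (hhe x - (x + s) * hge x) +
      Real.exp x * x ^ p * (h x - (x + s) * g x) * hp
  have := pos_of_mul_pos_right key (by positivity)
  linarith

/-- Equivalently, `t̃_{μ+1,ν+1} < t̃_{μ,ν}`. -/
lemma upper_diff (hν1 : 1 / 2 < ν) (hν2 : ν < μ + 1) (hA : 0 < A) (hg0 : ∀ x, 0 < g x)
    (hg : ∀ x, HasDerivAt g (g' x) x) (hh : ∀ x, HasDerivAt h (h' x) x)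
    (hge : ∀ x, x * g' x = h x - (μ + ν + 1) * g x)
    (hhe : ∀ x, x * h' x = -(μ - ν + 1) * h x + (μ + ν + 1) * A + x ^ 2 * g x)
    {x : ℝ} (hx : 0 < x) : h x - 2 * ν * g x - A < x * g x := by
  set p := μ + ν + 1 with hp
  have hp0 : 0 < p := by linarith
  have hgc : Continuous g := continuous_iff_continuousAt.2 fun x => (hg x).continuousAt
  have hhc : Continuous h := continuous_iff_continuousAt.2 fun x => (hh x).continuousAt
  have hpc : Continuous fun x : ℝ => x ^ p := Real.continuous_rpow_const hp0.le
  have key : 0 < Real.exp x * x ^ p * ((x + 2 * ν) * g x + A - h x) := by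
    refine pos_of_hasDerivAt_pos (f := fun x => Real.exp x * x ^ p * ((x + 2 * ν) * g x + A - h x))
      (by fun_prop) (by simp [Real.zero_rpow hp0.ne']) (fun x hx => ?_) hx
    have hd := ((Real.hasDerivAt_exp x).mul (Real.hasDerivAt_rpow_const (p := p) (Or.inl hx.ne'))).mul
      (((((hasDerivAt_id x).add_const (2 * ν)).mul (hg x)).add_const A).sub (hh x))
    refine ⟨_, hd, ?_⟩
    refine pos_of_mul_pos_right (a := x) ?_ hx.le
    have hW : 0 < Real.exp x * x ^ p * (x * (1 + 2 * ν) * g x + x * A) := by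
      have h1 : 0 < 1 + 2 * ν := by linarith
      have := hg0 x
      positivity
    refine hW.trans_eq (Eq.symm ?_)
    simp only [Pi.mul_apply, Pi.sub_apply, id]
    linear_combination Real.exp x * p * ((x + 2 * ν) * g x + A - h x) * mul_rpow_sub_one hx p +
      Real.exp x * x ^ p * (-hhe x + (x + 2 * ν) * hge x) +
      Real.exp x * x ^ p * (-h x) * hp
  have := pos_of_mul_pos_right key (by positivity)
  linarith

/-- The left-hand side vanishes at `0`. Its derivative is positive by `hlow`, `hup` and the
estimate `e^{-βx} - e^{-x} ≤ (1-β) x e^{-βx}`. -/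
lemma integral_lower (hν1 : 1 / 2 < ν) (hμν : 0 < μ + ν) {s β : ℝ} (hs0 : 0 < s) (hs1 : s ≤ 1)
    (hβ2 : β < 1) (hg0 : ∀ x, 0 < g x)
    (hg : ∀ x, HasDerivAt g (g' x) x)
    (hge : ∀ x, x * g' x = h x - (μ + ν + 1) * g x)
    (hlow : ∀ x, 0 < x → (x + s) * g x < h x)
    (hup : ∀ x, 0 < x → h x - 2 * ν * g x - A < x * g x)
    {x : ℝ} (hx : 0 < x) :
    0 < (1 - β) * (∫ u in (0:ℝ)..x, Real.exp (-β * u) * u ^ (μ + ν + 1) * g u)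
      - Real.exp (-β * x) * x ^ (μ + ν + 1) * g x
      + 2 * ν / (s * (1 - β)) * ((Real.exp (-β * x) - Real.exp (-x)) * (x ^ (μ + ν) * g x))
      + A * ∫ u in (0:ℝ)..x, Real.exp (-β * u) * u ^ (μ + ν) := by
  have hgc : Continuous g := continuous_iff_continuousAt.2 fun x => (hg x).continuousAt
  have hpc : Continuous fun x : ℝ => x ^ (μ + ν) := Real.continuous_rpow_const hμν.le
  have hpc1 : Continuous fun x : ℝ => x ^ (μ + ν + 1) := Real.continuous_rpow_const (by linarith)
  have hc1 : Continuous fun u : ℝ => Real.exp (-β * u) * u ^ (μ + ν + 1) * g u := by fun_prop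
  have hc2 : Continuous fun u : ℝ => Real.exp (-β * u) * u ^ (μ + ν) := by fun_prop
  have hd1 := fun x => (hc1.integral_hasStrictDerivAt 0 x).hasDerivAt
  have hd2 := fun x => (hc2.integral_hasStrictDerivAt 0 x).hasDerivAt
  have hI1 := continuous_iff_continuousAt.2 fun x => (hd1 x).continuousAt
  have hI2 := continuous_iff_continuousAt.2 fun x => (hd2 x).continuousAt
  set K := 2 * ν / (s * (1 - β)) with hK
  have hδ : 0 < 1 - β := by linarith
  have hK0 : 0 < K := by positivity
  have hKs : K * (s * (1 - β)) = 2 * ν := by rw [hK]; field_simp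
  refine pos_of_hasDerivAt_pos (f := fun x => (1 - β) *
      (∫ u in (0:ℝ)..x, Real.exp (-β * u) * u ^ (μ + ν + 1) * g u)
      - Real.exp (-β * x) * x ^ (μ + ν + 1) * g x
      + K * ((Real.exp (-β * x) - Real.exp (-x)) * (x ^ (μ + ν) * g x))
      + A * ∫ u in (0:ℝ)..x, Real.exp (-β * u) * u ^ (μ + ν)) (by fun_prop)
    (by simp [Real.zero_rpow (show μ + ν + 1 ≠ 0 by linarith)]) (fun x hx => ?_) hx
  have eβ : HasDerivAt (fun x : ℝ => Real.exp (-β * x)) (Real.exp (-β * x) * (-β)) x := by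
    simpa using ((hasDerivAt_id x).const_mul (-β)).exp
  have e1 : HasDerivAt (fun x : ℝ => Real.exp (-x)) (Real.exp (-x) * (-1)) x := by
    simpa using ((hasDerivAt_id x).neg).exp
  have r1 := Real.hasDerivAt_rpow_const (p := μ + ν + 1) (Or.inl hx.ne')
  have r0 := Real.hasDerivAt_rpow_const (p := μ + ν) (Or.inl hx.ne')
  have hd := ((((hd1 x).const_mul (1 - β)).sub ((eβ.mul r1).mul (hg x))).add
    (((eβ.sub e1).mul (r0.mul (hg x))).const_mul K)).add ((hd2 x).const_mul A)
  refine ⟨_, hd, ?_⟩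
  refine pos_of_mul_pos_right (a := x) ?_ hx.le
  have q1 := mul_rpow_sub_one hx (μ + ν + 1)
  have q0 := mul_rpow_sub_one hx (μ + ν)
  have q2 : x ^ (μ + ν + 1) = x * x ^ (μ + ν) := by rw [Real.rpow_add_one hx.ne']; ring
  have hW : 0 < x ^ (μ + ν) * (Real.exp (-β * x) * x * (x * g x - h x + A) +
      K * ((Real.exp (-x) - β * Real.exp (-β * x)) * x * g x +
        (Real.exp (-β * x) - Real.exp (-x)) * (h x - g x))) := by
    refine mul_pos (by positivity) ?_
    set E := Real.exp (-β * x) with hE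
    set F := Real.exp (-x) with hF
    have hE0 : 0 < E := Real.exp_pos _
    have hFE : F = E * Real.exp (-((1 - β) * x)) := by
      rw [hE, hF, ← Real.exp_add]; ring_nf
    have hlt : F < E := Real.exp_lt_exp.2 (by nlinarith)
    have hle : E - F ≤ E * ((1 - β) * x) := by
      have := Real.add_one_le_exp (-((1 - β) * x))
      rw [hFE]
      nlinarith
    have hgx := hg0 x
    have i1 : 0 < E * x * (x * g x - h x + A + 2 * ν * g x) :=
      mul_pos (by positivity) (by linarith [hup x hx])
    have i2 : 0 ≤ (E - F) * (h x - (x + s) * g x) :=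
      mul_nonneg (by linarith) (by linarith [hlow x hx])
    have i3 : 0 ≤ g x * (1 - s) * (E * ((1 - β) * x) - (E - F)) :=
      mul_nonneg (mul_nonneg hgx.le (by linarith)) (by linarith)
    have i4 := mul_nonneg hK0.le (add_nonneg i2 i3)
    linear_combination i1 + i4 - E * x * g x * hKs
  refine hW.trans_eq (Eq.symm ?_)
  simp only [Pi.mul_apply, Pi.sub_apply]
  rw [show μ + ν + 1 - 1 = μ + ν by ring, q2]
  linear_combination K * (Real.exp (-β * x) - Real.exp (-x)) * (μ + ν) * g x * q0 +
    (K * (Real.exp (-β * x) - Real.exp (-x)) * x ^ (μ + ν)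
      - Real.exp (-β * x) * x * x ^ (μ + ν)) * hge x

end system

/-! ### The incomplete gamma term and the conclusion -/

lemma Bconst_eq {μ ν β x : ℝ} (hβ : 0 < β) (hx : 0 < x) :
    Bconst μ ν β x = 1 / (2 ^ μ * Real.Gamma ((μ - ν + 1) / 2) * Real.Gamma ((μ + ν + 3) / 2)) *
      ∫ u in (0:ℝ)..x, Real.exp (-β * u) * u ^ (μ + ν) := by
  have key : β ^ (-μ - ν - 1) * lowerGamma (μ + ν + 1) (β * x) =
      ∫ u in (0:ℝ)..x, Real.exp (-β * u) * u ^ (μ + ν) := by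
    have h1 := intervalIntegral.mul_integral_comp_mul_left (a := 0) (b := x)
      (f := fun u : ℝ => Real.exp (-u) * u ^ (μ + ν + 1 - 1)) (c := β)
    rw [mul_zero] at h1
    rw [lowerGamma, ← h1, ← mul_assoc, ← intervalIntegral.integral_const_mul]
    refine intervalIntegral.integral_congr fun u hu => ?_
    rw [Set.uIcc_of_le hx.le] at hu
    have e : β ^ (-μ - ν - 1) * β * β ^ (μ + ν) = 1 := by
      rw [← Real.rpow_add_one hβ.ne', ← Real.rpow_add hβ, ← Real.rpow_zero β]
      ring_nf
    simp only [add_sub_cancel_right]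
    rw [Real.mul_rpow hβ.le hu.1, ← neg_mul]
    linear_combination Real.exp (-β * u) * u ^ (μ + ν) * e
  rw [Bconst, key]
  ring

theorem stmt6 (μ ν β : ℝ) (hμ : μ > -1/2) (hν1 : 1/2 < ν) (hν2 : ν < μ + 1)
    (hβ1 : 0 < β) (hβ2 : β < 1) :
    ∀ x : ℝ, 0 < x →
      ∫ u in (0:ℝ)..x, Real.exp (-β * u) * u ^ ν * lommel μ ν u >
        1 / (1 - β) *
          ((1 - 2 * ν * (μ + ν + (5 + Real.sqrt 17) / 2) / ((2 * ν - 1) * (1 - β) * x)) *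
              (Real.exp (-β * x) * x ^ ν * lommel μ ν x) - Bconst μ ν β x) := by
  intro x hx
  have hμν : 0 < μ + ν := by linarith
  have hδ : 0 < 1 - β := by linarith
  obtain ⟨g, h, g', h', A, hAe, hL, hA, hg0, hg, hh, hge, hhe⟩ :=
    lommel_system (μ := μ) (ν := ν) (by linarith) (by linarith)
  have hsqrt : 0 ≤ Real.sqrt 17 := Real.sqrt_nonneg _
  set M := μ + ν + (5 + Real.sqrt 17) / 2 with hM
  have hM2 : 2 ≤ M := by linarith
  have hν : 0 < 2 * ν - 1 := by linarith
  set s := (2 * ν - 1) / M with hs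
  have hs0 : 0 < s := by positivity
  have hs1 : s ≤ 1 := by
    rw [hs, div_le_one (by linarith)]
    linarith
  have hs2 : s ≤ (2 * ν - 1) / 2 := by
    rw [hs]
    gcongr
  have hlow := fun x hx => lower_ratio (x := x) hν2 hs0 hs2 hA hg0 hg hh hge hhe hx
  have hup := fun x hx => upper_diff (x := x) hν1 hν2 hA hg0 hg hh hge hhe hx
  have main := integral_lower hν1 hμν hs0 hs1 hβ2 hg0 hg hge hlow hup hx
  have hI : ∫ u in (0:ℝ)..x, Real.exp (-β * u) * u ^ ν * lommel μ ν u =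
      ∫ u in (0:ℝ)..x, Real.exp (-β * u) * u ^ (μ + ν + 1) * g u := by
    refine intervalIntegral.integral_congr fun u hu => ?_
    rw [Set.uIcc_of_le hx.le] at hu
    -- `lommel_eq` needs `0 < u`; at `u = 0` both integrands vanish because `0 ^ p = 0` for `p ≠ 0`.
    rcases hu.1.eq_or_lt with h0 | h0
    · simp [← h0, Real.zero_rpow (show μ + ν + 1 ≠ 0 by linarith),
        Real.zero_rpow (show ν ≠ 0 by linarith)]
    · simp only [hL u h0]
      rw [show u ^ (μ + ν + 1) = u ^ ν * u ^ (μ + 1) by rw [← Real.rpow_add h0]; congr 1; ring]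
      ring
  rw [hI, Bconst_eq hβ1 hx, ← hAe, hL x hx, gt_iff_lt, one_div, inv_mul_lt_iff₀ hδ]
  have e1 : Real.exp (-β * x) * x ^ ν * (x ^ (μ + 1) * g x) =
      Real.exp (-β * x) * x ^ (μ + ν + 1) * g x := by
    rw [show x ^ (μ + ν + 1) = x ^ ν * x ^ (μ + 1) by rw [← Real.rpow_add hx]; congr 1; ring]
    ring
  have e2 : 2 * ν * M / ((2 * ν - 1) * (1 - β) * x) = 2 * ν / (s * (1 - β)) / x := by
    have : M ≠ 0 := by linarith
    rw [hs]
    field_simp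
  have e3 : x ^ (μ + ν + 1) = x * x ^ (μ + ν) := by rw [Real.rpow_add_one hx.ne']; ring
  rw [e1, e2]
  set K := 2 * ν / (s * (1 - β)) with hK
  have hK0 : 0 < K := by positivity
  have e4 : K / x * (Real.exp (-β * x) * x ^ (μ + ν + 1) * g x) =
      K * (Real.exp (-β * x) * (x ^ (μ + ν) * g x)) := by
    rw [e3]
    field_simp
  have e5 : 0 < K * (Real.exp (-x) * (x ^ (μ + ν) * g x)) := by
    have := hg0 x
    positivity
  linear_combination main + e5 - e4
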